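/- Let L be a binomial ideal of S = K[t_1,…,t_s]. Then L is a lattice ideal (i.e., L = I(𝓛) for some lattice 𝓛 ⊂ Z^s) if and only if t_i is a non-zerodivisor on S/L for every i = 1, …, s. -/

import Mathlib

open MvPolynomial

/-- The binomial `t^{a⁺} - t^{a⁻}` associated to an integer vector `a ∈ ℤ^s`. -/
noncomputable def latticeBinomial (K : Type*) [Field K] {s : ℕ} (a : Fin s → ℤ) :
    MvPolynomial (Fin s) K :=
  (∏ i, X i ^ (a i).toNat) - ∏ i, X i ^ (-(a i)).toNat

/-- The lattice ideal `I(𝓛) = ({t^{a⁺} - t^{a⁻} : a ∈ 𝓛})` of a lattice `𝓛 ⊆ ℤ^s`. -/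
noncomputable def latticeIdeal (K : Type*) [Field K] {s : ℕ} (L : AddSubgroup (Fin s → ℤ)) :
    Ideal (MvPolynomial (Fin s) K) :=
  Ideal.span {f | ∃ a ∈ L, f = latticeBinomial K a}

/-!
The lattice ideal of `𝓛` is the kernel of the map `S → K[ℤ^s / 𝓛]` sending `t^a` to the class
of `a`. Monomials go to units of the group algebra, so each `t_i` is a non-zerodivisor modulo the
lattice ideal. Conversely, the differences `a - b` with `t^a - t^b ∈ L` always form a lattice, and
`t^a - t^b` is the lattice binomial of `a - b` multiplied by the monomial `t^{min(a, b)}`; when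
the `t_i` are non-zerodivisors modulo `L` this monomial can be cancelled, so that `L` contains the
ideal of that lattice.
-/

section AddMonoidAlgebra

open AddMonoidAlgebra

theorem ker_mapDomainRingHom_eq_span {R M N : Type*} [Ring R] [AddMonoid M] [AddMonoid N]
    (f : M →+ N) :
    RingHom.ker (mapDomainRingHom R f) =
      Ideal.span {x | ∃ a b, f a = f b ∧ x = single a 1 - single b 1} := by
  set I : Ideal (AddMonoidAlgebra R M) :=
    Ideal.span {x | ∃ a b, f a = f b ∧ x = single a 1 - single b 1}
  apply le_antisymm
  · -- Move each exponent to the chosen representative of its fibre: this changes `x` only by an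
    -- element of `I`, and annihilates `x` when `x` is in the kernel.
    let rep : M → M := Function.invFun f ∘ f
    have f_rep (a : M) : f (rep a) = f a := Function.invFun_eq ⟨a, rfl⟩
    have sub_rep_mem (x : AddMonoidAlgebra R M) : x - mapDomain rep x ∈ I := by
      induction x using AddMonoidAlgebra.induction_linear with
      | zero => simp
      | add x y hx hy =>
        rw [mapDomain_add, add_sub_add_comm]
        exact I.add_mem hx hy
      | single a r =>
        have h : single a 1 - single (rep a) 1 ∈ I :=
          Ideal.subset_span ⟨a, rep a, (f_rep a).symm, rfl⟩
        simpa [mul_sub, single_mul_single] using I.mul_mem_left (single 0 r) h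
    intro x hx
    have rep_eq_zero : mapDomain rep x = 0 := by
      have map_eq_zero : mapDomain f x = 0 := hx
      calc
        mapDomain rep x = mapDomain (Function.invFun f) (mapDomain f x) := by
          ext; simp [rep, Finsupp.mapDomain_comp]
        _ = 0 := by rw [map_eq_zero, mapDomain_zero]
    simpa only [rep_eq_zero, sub_zero] using sub_rep_mem x
  · refine Ideal.span_le.2 ?_
    rintro _ ⟨a, b, hab, rfl⟩
    change mapDomainRingHom R f (single a 1 - single b 1) = 0
    simp only [map_sub, mapDomainRingHom_apply, mapDomain_single, hab, sub_self]

theorem isUnit_addMonoidAlgebra_single_one {R G : Type*} [Semiring R] [AddGroup G] (g : G) :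
    IsUnit (single g 1 : AddMonoidAlgebra R G) :=
  (Group.isUnit (Multiplicative.ofAdd g)).map (of R G)

end AddMonoidAlgebra

section LatticeIdeal

variable {σ R : Type*}

/-- The inclusion `ℕ^σ → ℤ^σ` of exponent vectors. -/
noncomputable def intExponent : (σ →₀ ℕ) →+ (σ →₀ ℤ) :=
  Finsupp.mapRange.addMonoidHom (Nat.castAddMonoidHom ℤ)

@[simp]
theorem intExponent_apply (a : σ →₀ ℕ) (i : σ) : intExponent a i = a i := rfl

/-- The homomorphism `ℕ^σ → ℤ^σ / 𝓛` whose fibres are the classes of exponents modulo `𝓛`. -/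
noncomputable def exponentClass (𝓛 : AddSubgroup (σ →₀ ℤ)) : (σ →₀ ℕ) →+ (σ →₀ ℤ) ⧸ 𝓛 :=
  (QuotientAddGroup.mk' 𝓛).comp intExponent

theorem exponentClass_eq_iff {𝓛 : AddSubgroup (σ →₀ ℤ)} {a b : σ →₀ ℕ} :
    exponentClass 𝓛 a = exponentClass 𝓛 b ↔ intExponent a - intExponent b ∈ 𝓛 :=
  QuotientAddGroup.eq_iff_sub_mem

variable [CommRing R]

/-- An ideal of `R[t_i : i ∈ σ]` is binomial if it is generated by pure differences `t^a - t^b`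
of monomials. -/
def IsBinomialIdeal (I : Ideal (MvPolynomial σ R)) : Prop :=
  ∃ G : Set (MvPolynomial σ R), I = Ideal.span G ∧
    ∀ g ∈ G, ∃ a b : σ →₀ ℕ, g = monomial a 1 - monomial b 1

variable (R) in
/-- The binomial `t^{c⁺} - t^{c⁻}` over any commutative ring and in any set of variables, for a
finitely supported integer vector `c`. -/
noncomputable def finsuppLatticeBinomial (c : σ →₀ ℤ) : MvPolynomial σ R :=
  monomial (c.mapRange Int.toNat rfl) 1 - monomial ((-c).mapRange Int.toNat rfl) 1

variable (R) in
/-- The lattice ideal of `𝓛 ⊆ ℤ^σ` over any commutative ring and in any set of variables, where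
`ℤ^σ` consists of the finitely supported vectors. -/
noncomputable def finsuppLatticeIdeal (𝓛 : AddSubgroup (σ →₀ ℤ)) : Ideal (MvPolynomial σ R) :=
  Ideal.span {f | ∃ c ∈ 𝓛, f = finsuppLatticeBinomial R c}

theorem intExponent_toNat_sub_intExponent_toNat_neg (c : σ →₀ ℤ) :
    intExponent (c.mapRange Int.toNat rfl) - intExponent ((-c).mapRange Int.toNat rfl) = c := by
  ext i
  simp

theorem monomial_sub_monomial_eq_mul_finsuppLatticeBinomial (a b : σ →₀ ℕ) :
    (monomial a 1 - monomial b 1 : MvPolynomial σ R) =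
      monomial (a ⊓ b) 1 * finsuppLatticeBinomial R (intExponent a - intExponent b) := by
  have ha : a ⊓ b + (intExponent a - intExponent b).mapRange Int.toNat rfl = a := by
    ext i
    simp only [Finsupp.add_apply, Finsupp.inf_apply, Finsupp.mapRange_apply, Finsupp.sub_apply,
      intExponent_apply]
    omega
  have hb : a ⊓ b + (-(intExponent a - intExponent b)).mapRange Int.toNat rfl = b := by
    ext i
    simp only [Finsupp.add_apply, Finsupp.inf_apply, Finsupp.mapRange_apply, Finsupp.sub_apply,
      Finsupp.neg_apply, intExponent_apply]
    omega
  rw [finsuppLatticeBinomial, mul_sub, monomial_mul, monomial_mul, ha, hb, one_mul]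

theorem monomial_sub_monomial_mem_finsuppLatticeIdeal {𝓛 : AddSubgroup (σ →₀ ℤ)} {a b : σ →₀ ℕ}
    (h : intExponent a - intExponent b ∈ 𝓛) :
    monomial a 1 - monomial b 1 ∈ finsuppLatticeIdeal R 𝓛 := by
  rw [monomial_sub_monomial_eq_mul_finsuppLatticeBinomial]
  exact Ideal.mul_mem_left _ _ (Ideal.subset_span ⟨_, h, rfl⟩)

theorem finsuppLatticeIdeal_eq_ker (𝓛 : AddSubgroup (σ →₀ ℤ)) :
    finsuppLatticeIdeal R 𝓛 =
      RingHom.ker (AddMonoidAlgebra.mapDomainRingHom R (exponentClass 𝓛)) := by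
  rw [ker_mapDomainRingHom_eq_span]
  apply le_antisymm
  · refine Ideal.span_mono ?_
    rintro _ ⟨c, hc, rfl⟩
    refine ⟨_, _, exponentClass_eq_iff.2 ?_, rfl⟩
    rwa [intExponent_toNat_sub_intExponent_toNat_neg]
  · refine Ideal.span_le.2 ?_
    rintro _ ⟨a, b, hab, rfl⟩
    exact monomial_sub_monomial_mem_finsuppLatticeIdeal (exponentClass_eq_iff.1 hab)

theorem mk_monomial_mem_nonZeroDivisors_finsuppLatticeIdeal (𝓛 : AddSubgroup (σ →₀ ℤ))
    (a : σ →₀ ℕ) :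
    Ideal.Quotient.mk (finsuppLatticeIdeal R 𝓛) (monomial a 1) ∈
      nonZeroDivisors (MvPolynomial σ R ⧸ finsuppLatticeIdeal R 𝓛) := by
  rw [finsuppLatticeIdeal_eq_ker]
  let φ := AddMonoidAlgebra.mapDomainRingHom R (exponentClass 𝓛)
  have isUnit_map : IsUnit (φ (monomial a 1)) := by
    rw [show φ (monomial a 1) = _ from AddMonoidAlgebra.mapDomain_single]
    exact isUnit_addMonoidAlgebra_single_one _
  exact mem_nonZeroDivisors_of_injective φ.kerLift_injective isUnit_map.mem_nonZeroDivisors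

/-- The lattice of all `a - b` with `t^a - t^b ∈ I`. -/
def exponentLattice (I : Ideal (MvPolynomial σ R)) : AddSubgroup (σ →₀ ℤ) where
  carrier := {c | ∃ a b : σ →₀ ℕ,
    c = intExponent a - intExponent b ∧ monomial a 1 - monomial b 1 ∈ I}
  zero_mem' := ⟨0, 0, by simp, by simp⟩
  add_mem' := by
    rintro _ _ ⟨a, b, rfl, hab⟩ ⟨c, d, rfl, hcd⟩
    refine ⟨a + c, b + d, by simp only [map_add]; abel, ?_⟩
    have : (monomial (a + c) 1 - monomial (b + d) 1 : MvPolynomial σ R) =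
        monomial c 1 * (monomial a 1 - monomial b 1) +
          monomial b 1 * (monomial c 1 - monomial d 1) := by
      simp only [mul_sub, monomial_mul, one_mul, add_comm c]
      abel
    rw [this]
    exact I.add_mem (I.mul_mem_left _ hab) (I.mul_mem_left _ hcd)
  neg_mem' := by
    rintro _ ⟨a, b, rfl, hab⟩
    exact ⟨b, a, neg_sub _ _, by simpa only [neg_sub] using I.neg_mem hab⟩

theorem IsBinomialIdeal.le_finsuppLatticeIdeal_exponentLattice {I : Ideal (MvPolynomial σ R)}
    (hI : IsBinomialIdeal I) : I ≤ finsuppLatticeIdeal R (exponentLattice I) := by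
  obtain ⟨G, hG, hbin⟩ := hI
  have G_subset : G ⊆ finsuppLatticeIdeal R (exponentLattice I) := by
    intro g hg
    obtain ⟨a, b, rfl⟩ := hbin g hg
    have mem_I : monomial a 1 - monomial b 1 ∈ I := hG ▸ Ideal.subset_span hg
    exact monomial_sub_monomial_mem_finsuppLatticeIdeal ⟨a, b, rfl, mem_I⟩
  exact hG.le.trans (Ideal.span_le.2 G_subset)

theorem mk_monomial_mem_nonZeroDivisors {I : Ideal (MvPolynomial σ R)}
    (hX : ∀ i, Ideal.Quotient.mk I (X i) ∈ nonZeroDivisors (MvPolynomial σ R ⧸ I))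
    (a : σ →₀ ℕ) :
    Ideal.Quotient.mk I (monomial a 1) ∈ nonZeroDivisors (MvPolynomial σ R ⧸ I) := by
  rw [← prod_X_pow_eq_monomial, map_prod]
  simp only [map_pow]
  exact prod_mem fun i _ => pow_mem (hX i) _

theorem finsuppLatticeIdeal_exponentLattice_le {I : Ideal (MvPolynomial σ R)}
    (hX : ∀ i, Ideal.Quotient.mk I (X i) ∈ nonZeroDivisors (MvPolynomial σ R ⧸ I)) :
    finsuppLatticeIdeal R (exponentLattice I) ≤ I := by
  refine Ideal.span_le.2 ?_
  rintro _ ⟨_, ⟨a, b, rfl, hab⟩, rfl⟩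
  rw [monomial_sub_monomial_eq_mul_finsuppLatticeBinomial, ← Ideal.Quotient.eq_zero_iff_mem,
    map_mul, mul_left_mem_nonZeroDivisors_eq_zero_iff (mk_monomial_mem_nonZeroDivisors hX _)] at hab
  exact Ideal.Quotient.eq_zero_iff_mem.1 hab

theorem binomial_ideal_is_lattice_ideal_iff_X_nonZeroDivisors_general
    {I : Ideal (MvPolynomial σ R)} (hI : IsBinomialIdeal I) :
    (∃ 𝓛 : AddSubgroup (σ →₀ ℤ), I = finsuppLatticeIdeal R 𝓛) ↔
      ∀ i, Ideal.Quotient.mk I (X i) ∈ nonZeroDivisors (MvPolynomial σ R ⧸ I) := by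
  constructor
  · rintro ⟨𝓛, rfl⟩ i
    exact mk_monomial_mem_nonZeroDivisors_finsuppLatticeIdeal 𝓛 (Finsupp.single i 1)
  · intro hX
    exact ⟨exponentLattice I, le_antisymm hI.le_finsuppLatticeIdeal_exponentLattice
      (finsuppLatticeIdeal_exponentLattice_le hX)⟩

end LatticeIdeal

section FinitelyManyVariables

theorem prod_univ_X_pow_eq_monomial {σ R : Type*} [Fintype σ] [CommSemiring R] (a : σ →₀ ℕ) :
    ∏ i, X i ^ a i = (monomial a 1 : MvPolynomial σ R) := by
  rw [monic_monomial_eq, Finsupp.prod_fintype _ _ fun i => pow_zero (X i)]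

theorem isBinomialIdeal_iff_exists_prod_X_pow {σ R : Type*} [Fintype σ] [CommRing R]
    {I : Ideal (MvPolynomial σ R)} :
    IsBinomialIdeal I ↔ ∃ G : Set (MvPolynomial σ R), I = Ideal.span G ∧
      ∀ g ∈ G, ∃ a b : σ → ℕ, g = (∏ i, X i ^ a i) - ∏ i, X i ^ b i := by
  simp only [IsBinomialIdeal, ← prod_univ_X_pow_eq_monomial,
    Finsupp.equivFunOnFinite.surjective.exists, Finsupp.equivFunOnFinite_apply]

variable {K : Type*} [Field K] {s : ℕ}

theorem latticeBinomial_coe (c : Fin s →₀ ℤ) :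
    latticeBinomial K (c : Fin s → ℤ) = finsuppLatticeBinomial K c := by
  simp only [latticeBinomial, finsuppLatticeBinomial, ← prod_univ_X_pow_eq_monomial,
    Finsupp.mapRange_apply, Finsupp.neg_apply]

theorem latticeIdeal_eq_finsuppLatticeIdeal_comap (𝓛 : AddSubgroup (Fin s → ℤ)) :
    latticeIdeal K 𝓛 =
      finsuppLatticeIdeal K (Finsupp.addEquivFunOnFinite.comapAddSubgroup 𝓛) := by
  simp only [latticeIdeal, finsuppLatticeIdeal, ← latticeBinomial_coe,
    Finsupp.equivFunOnFinite.surjective.exists]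
  rfl

theorem exists_eq_latticeIdeal_iff {I : Ideal (MvPolynomial (Fin s) K)} :
    (∃ 𝓛 : AddSubgroup (Fin s → ℤ), I = latticeIdeal K 𝓛) ↔
      ∃ 𝓛 : AddSubgroup (Fin s →₀ ℤ), I = finsuppLatticeIdeal K 𝓛 := by
  simp only [latticeIdeal_eq_finsuppLatticeIdeal_comap]
  let e : (Fin s →₀ ℤ) ≃+ (Fin s → ℤ) := Finsupp.addEquivFunOnFinite
  exact (e.comapAddSubgroup.surjective.exists (p := (I = finsuppLatticeIdeal K ·))).symm

end FinitelyManyVariables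

/-- Theorem: let `L` be a binomial ideal of `S = K[t_1,…,t_s]` (an ideal generated by
binomials `t^a - t^b` with `a, b ∈ ℕ^s`).  Then `L` is a lattice ideal (i.e. `L = I(𝓛)` for
some lattice `𝓛 ⊆ ℤ^s`) if and only if each variable `t_i` is a non-zerodivisor on `S/L`. -/
theorem binomial_ideal_is_lattice_ideal_iff_X_nonZeroDivisors
    (K : Type*) [Field K] {s : ℕ}
    (L : Ideal (MvPolynomial (Fin s) K))
    (hbin : ∃ G : Set (MvPolynomial (Fin s) K), L = Ideal.span G ∧
      ∀ g ∈ G, ∃ a b : Fin s → ℕ, g = (∏ i, X i ^ a i) - ∏ i, X i ^ b i) :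
    (∃ 𝓛 : AddSubgroup (Fin s → ℤ), L = latticeIdeal K 𝓛) ↔
      ∀ i : Fin s, Ideal.Quotient.mk L (X i) ∈
        nonZeroDivisors (MvPolynomial (Fin s) K ⧸ L) :=
  exists_eq_latticeIdeal_iff.trans <|
    binomial_ideal_is_lattice_ideal_iff_X_nonZeroDivisors_general
      (isBinomialIdeal_iff_exists_prod_X_pow.2 hbin)
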